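/- Let ϑ, ϑ₁, ϑ₂ be Beurling weights on ℝ^d and 1 < p, q, r < ∞. Assume ϑ ≺ ϑ₁ and that ϑ(x)/ϑ₁(x) does not tend to zero as |x| → ∞. Then A^{p,1,q,r}_{ϑ₁,ϑ₂}(ℝ^d) ⊆ (L^p_ϑ, ℓ¹) and the inclusion map from A^{p,1,q,r}_{ϑ₁,ϑ₂}(ℝ^d) into (L^p_ϑ, ℓ¹) is never a compact operator: there exists a sequence bounded in ‖·‖_A having no subsequence that converges in the norm ‖·‖_{p1,ϑ}. -/

import Mathlib

open MeasureTheory Filter Topology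
open scoped ENNReal NNReal BigOperators

noncomputable section

/-- The unit cube `α + [0,1)^d` at the integer point `α ∈ ℤ^d`. -/
def cube {d : ℕ} (α : Fin d → ℤ) : Set (Fin d → ℝ) :=
  Set.univ.pi fun i => Set.Ico (α i : ℝ) ((α i : ℝ) + 1)

/-- The weighted amalgam norm `‖f‖_{pq,ω}` of the space `(L^p_ω, ℓ^q)`. -/
def amalgamNorm {d : ℕ} (p q : ℝ) (ω : (Fin d → ℝ) → ℝ) (f : (Fin d → ℝ) → ℂ) : ℝ≥0∞ :=
  (∑' α : Fin d → ℤ,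
      (eLpNorm (fun x => ω x • f x) (ENNReal.ofReal p) (volume.restrict (cube α))) ^ q) ^ (1 / q)

/-- Membership in the weighted amalgam space `(L^p_ω, ℓ^q)`. -/
def MemAmalgam {d : ℕ} (p q : ℝ) (ω : (Fin d → ℝ) → ℝ) (f : (Fin d → ℝ) → ℂ) : Prop :=
  Measurable f ∧ amalgamNorm p q ω f < ⊤

/-- A Beurling weight: measurable, `ϑ ≥ 1` and submultiplicative. -/
def IsBeurling {d : ℕ} (ϑ : (Fin d → ℝ) → ℝ) : Prop :=
  Measurable ϑ ∧ (∀ x, 1 ≤ ϑ x) ∧ ∀ x y, ϑ (x + y) ≤ ϑ x * ϑ y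

/-- The Fourier transform `f̂(ξ) = ∫ f(x) e^{-2πi⟨x,ξ⟩} dx`. -/
def fourierT {d : ℕ} (f : (Fin d → ℝ) → ℂ) (ξ : Fin d → ℝ) : ℂ :=
  ∫ x : Fin d → ℝ,
    Complex.exp (-(2 * (Real.pi : ℂ) * Complex.I * ∑ i, (x i : ℂ) * (ξ i : ℂ))) * f x

/-- The norm of `A^{p,1,q,r}_{ϑ₁,ϑ₂}(ℝ^d)`. -/
def ANorm {d : ℕ} (p q r : ℝ) (ϑ₁ ϑ₂ : (Fin d → ℝ) → ℝ) (f : (Fin d → ℝ) → ℂ) : ℝ≥0∞ :=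
  amalgamNorm p 1 ϑ₁ f + amalgamNorm q r ϑ₂ (fourierT f)

/-- Membership in `A^{p,1,q,r}_{ϑ₁,ϑ₂}(ℝ^d)`. -/
def MemA {d : ℕ} (p q r : ℝ) (ϑ₁ ϑ₂ : (Fin d → ℝ) → ℝ) (f : (Fin d → ℝ) → ℂ) : Prop :=
  MemAmalgam p 1 ϑ₁ f ∧ MemAmalgam q r ϑ₂ (fourierT f)

/-- Convolution `(f∗g)(x) = ∫ f(x−t)g(t) dt`. -/
def convF {d : ℕ} (f g : (Fin d → ℝ) → ℂ) (x : Fin d → ℝ) : ℂ :=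
  ∫ t : Fin d → ℝ, f (x - t) * g t

/-- `ϑ ≺ ϑ'` : domination of weights up to a constant. -/
def Prec {d : ℕ} (ϑ ϑ' : (Fin d → ℝ) → ℝ) : Prop :=
  ∃ C : ℝ, 0 < C ∧ ∀ x, ϑ x ≤ C * ϑ' x

/-- The Beurling–Domar condition `∑_{n≥1} log ϑ(nx)/n² < ∞`. -/
def BeurlingDomar {d : ℕ} (ϑ : (Fin d → ℝ) → ℝ) : Prop :=
  ∀ x : Fin d → ℝ, Summable fun n : ℕ => Real.log (ϑ ((n : ℝ) • x)) / (n : ℝ) ^ 2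

/-- `w` does not tend to zero as `|x| → ∞`. -/
def NotVanishingAtInfty {d : ℕ} (w : (Fin d → ℝ) → ℝ) : Prop :=
  ∃ δ : ℝ, 0 < δ ∧ ∀ R : ℝ, 0 < R → ∃ x : Fin d → ℝ, R < ‖x‖ ∧ δ ≤ w x

end

/-!
Translating `f` by a lattice point `a` moves the cubes among themselves and multiplies `f̂` by a
character. So the functions `ϑ₁(a)⁻¹ • f(· - a)`, with `f` the Gaussian, are bounded in
`‖·‖_A`: submultiplicativity and `ϑ₁ ≥ 1` make the factor `ϑ₁(a)⁻¹` absorb the growth of the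
weight. Beurling weights vary by a bounded factor over a cube, so at infinitely many lattice
points `ϑ(a) ≥ δ ϑ₁(a)`, and there the function keeps a fixed part of its `(L^p_ϑ, ℓ¹)`-norm on
the cube at `a`. A limit in `(L^p_ϑ, ℓ¹)` would have a non-summable family of local norms.
-/

open scoped translate

section Cube

variable {d : ℕ}

/-- The integer point `a ∈ ℤ^d` as a vector of `ℝ^d`. -/
def latticePoint (a : Fin d → ℤ) : Fin d → ℝ := fun i => a i

theorem measurableSet_cube (α : Fin d → ℤ) : MeasurableSet (cube α) :=
  MeasurableSet.univ_pi fun _ => measurableSet_Ico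

theorem volume_cube (α : Fin d → ℤ) : volume (cube α) = 1 := by
  simp [cube, Real.volume_pi_Ico]

theorem mem_cube_iff {α : Fin d → ℤ} {x : Fin d → ℝ} :
    x ∈ cube α ↔ ∀ i, (α i : ℝ) ≤ x i ∧ x i < α i + 1 := by
  simp [cube, Set.mem_pi]

theorem mem_cube_floor (x : Fin d → ℝ) : x ∈ cube fun i => ⌊x i⌋ :=
  mem_cube_iff.2 fun i => ⟨Int.floor_le (x i), Int.lt_floor_add_one (x i)⟩

theorem norm_sub_latticePoint_le {α : Fin d → ℤ} {x : Fin d → ℝ} (hx : x ∈ cube α) :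
    ‖x - latticePoint α‖ ≤ 1 := by
  refine (pi_norm_le_iff_of_nonneg zero_le_one).2 fun i => ?_
  have hi := mem_cube_iff.1 hx i
  rw [Pi.sub_apply, latticePoint, Real.norm_eq_abs, abs_le]
  constructor <;> linarith

theorem preimage_sub_latticePoint_cube (a α : Fin d → ℤ) :
    (fun x => x - latticePoint a) ⁻¹' cube α = cube (α + a) := by
  ext x
  simp only [Set.mem_preimage, mem_cube_iff, Pi.sub_apply, Pi.add_apply, latticePoint]
  push_cast
  exact forall_congr' fun i => and_congr le_sub_iff_add_le
    (by rw [sub_lt_iff_lt_add, add_right_comm])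

theorem eLpNorm_translate_cube {E : Type*} [NormedAddCommGroup E] (p : ℝ≥0∞)
    (a α : Fin d → ℤ) (f : (Fin d → ℝ) → E) :
    eLpNorm (τ (latticePoint a) f) p (volume.restrict (cube (α + a))) =
      eLpNorm f p (volume.restrict (cube α)) := by
  have hemb : MeasurableEmbedding fun x => x - latticePoint a :=
    (MeasurableEquiv.subRight (latticePoint a)).measurableEmbedding
  have hmap := ((measurePreserving_sub_right volume (latticePoint a)).restrict_preimage_emb hemb
    (cube α)).map_eq
  rw [preimage_sub_latticePoint_cube] at hmap
  rw [← hmap, hemb.eLpNorm_map_measure]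
  rfl

end Cube

section Growth

/-- A weight `ω` on a normed space grows at most exponentially: `|ω(x)| ≤ A e^{B‖x‖}`. The sign of
`B` is not restricted. -/
def HasExpGrowth {E : Type*} [Norm E] (ω : E → ℝ) : Prop :=
  ∃ A B : ℝ, ∀ x, |ω x| ≤ A * Real.exp (B * ‖x‖)

theorem succ_nsmul_le_pow_of_submultiplicative {E : Type*} [AddMonoid E] {f : E → ℝ}
    (hf0 : ∀ x, 0 ≤ f x) (hf : ∀ x y, f (x + y) ≤ f x * f y) (x : E) (n : ℕ) :
    f ((n + 1) • x) ≤ f x ^ (n + 1) := by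
  induction n with
  | zero => simp
  | succ n ih =>
    rw [succ_nsmul, pow_succ]
    exact (hf _ _).trans (mul_le_mul_of_nonneg_right ih (hf0 x))

theorem hasExpGrowth_of_submultiplicative {E : Type*} [NormedAddCommGroup E] [NormedSpace ℝ E]
    {f : E → ℝ} (hf0 : ∀ x, 0 ≤ f x) (hf : ∀ x y, f (x + y) ≤ f x * f y) {ε K : ℝ} (hε : 0 < ε)
    (hK : 1 ≤ K) (hball : ∀ x, ‖x‖ < ε → f x ≤ K) : HasExpGrowth f := by
  have hK0 : 0 < K := zero_lt_one.trans_le hK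
  have hlog : 0 ≤ Real.log K := Real.log_nonneg hK
  refine ⟨K, Real.log K / ε, fun x => ?_⟩
  set m := ⌊‖x‖ / ε⌋₊
  have hm : (0 : ℝ) < m + 1 := by positivity
  have hsmall : ‖((m : ℝ) + 1)⁻¹ • x‖ < ε := by
    rw [norm_smul, norm_inv, Real.norm_of_nonneg hm.le, inv_mul_lt_iff₀ hm, ← div_lt_iff₀ hε]
    exact Nat.lt_floor_add_one _
  have hx : (m + 1) • (((m : ℝ) + 1)⁻¹ • x) = x := by
    rw [← Nat.cast_smul_eq_nsmul ℝ, smul_smul, Nat.cast_add_one, mul_inv_cancel₀ hm.ne', one_smul]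
  calc |f x| = f ((m + 1) • (((m : ℝ) + 1)⁻¹ • x)) := by rw [hx, abs_of_nonneg (hf0 x)]
    _ ≤ f (((m : ℝ) + 1)⁻¹ • x) ^ (m + 1) := succ_nsmul_le_pow_of_submultiplicative hf0 hf _ m
    _ ≤ K ^ (m + 1) := pow_le_pow_left₀ (hf0 _) (hball _ hsmall) _
    _ = K * Real.exp (m * Real.log K) := by
        rw [pow_succ', Real.exp_nat_mul, Real.exp_log hK0]
    _ ≤ K * Real.exp (‖x‖ / ε * Real.log K) := by
        gcongr
        exact Nat.floor_le (by positivity)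
    _ = K * Real.exp (Real.log K / ε * ‖x‖) := by rw [div_mul_comm]

end Growth

namespace IsBeurling

variable {d : ℕ} {ϑ : (Fin d → ℝ) → ℝ}

theorem pos (h : IsBeurling ϑ) (x : Fin d → ℝ) : 0 < ϑ x := zero_lt_one.trans_le (h.2.1 x)

theorem le_mul_sub (h : IsBeurling ϑ) (x y : Fin d → ℝ) : ϑ x ≤ ϑ y * ϑ (x - y) := by
  simpa only [add_sub_cancel] using h.2.2 y (x - y)

-- Steinhaus: some `{ϑ ≤ N, ϑ(-·) ≤ N}` has positive measure, so its difference set is a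
-- neighbourhood of `0`, on which submultiplicativity gives `ϑ ≤ N²`.
theorem exists_le_near_zero (h : IsBeurling ϑ) :
    ∃ ε K : ℝ, 0 < ε ∧ ∀ x, ‖x‖ < ε → ϑ x ≤ K := by
  let S : ℕ → Set (Fin d → ℝ) := fun N => {x | ϑ x ≤ N ∧ ϑ (-x) ≤ N}
  have hSmeas (N : ℕ) : MeasurableSet (S N) :=
    (measurableSet_le h.1 measurable_const).inter
      (measurableSet_le (h.1.comp measurable_neg) measurable_const)
  have hcover : ⋃ N, S N = Set.univ := by
    refine Set.iUnion_eq_univ_iff.2 fun x => ?_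
    obtain ⟨N, hN⟩ := exists_nat_ge (max (ϑ x) (ϑ (-x)))
    exact ⟨N, max_le_iff.1 hN⟩
  obtain ⟨N, hNpos⟩ : ∃ N, 0 < volume (S N) :=
    exists_measure_pos_of_not_measure_iUnion_null
      (by rw [hcover]; exact Measure.measure_univ_ne_zero.2 (NeZero.ne _))
  obtain ⟨ε, hε, hball⟩ := Metric.mem_nhds_iff.1
    (Measure.sub_mem_nhds_zero_of_addHaar_pos volume (S N) (hSmeas N) hNpos)
  refine ⟨ε, N * N, hε, fun x hx => ?_⟩
  obtain ⟨y, hy, z, hz, rfl⟩ := Set.mem_sub.1 (hball (mem_ball_zero_iff.2 hx))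
  rw [sub_eq_add_neg]
  exact (h.2.2 y (-z)).trans (mul_le_mul hy.1 hz.2 (h.pos _).le (Nat.cast_nonneg N))

theorem hasExpGrowth (h : IsBeurling ϑ) : HasExpGrowth ϑ := by
  obtain ⟨ε, K, hε, hball⟩ := h.exists_le_near_zero
  have hK : 1 ≤ K := (h.2.1 0).trans (hball 0 (by simpa using hε))
  exact hasExpGrowth_of_submultiplicative (fun x => (h.pos x).le) h.2.2 hε hK hball

theorem exists_le_mul_of_norm_sub_le_one (h : IsBeurling ϑ) :
    ∃ M : ℝ, 0 < M ∧ ∀ x y, ‖x - y‖ ≤ 1 → ϑ x ≤ M * ϑ y := by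
  obtain ⟨A, B, hAB⟩ := h.hasExpGrowth
  have hA : 0 < A := by
    have h0 := (abs_pos.2 (h.pos 0).ne').trans_le (hAB 0)
    rwa [norm_zero, mul_zero, Real.exp_zero, mul_one] at h0
  refine ⟨A * Real.exp |B|, by positivity, fun x y hxy => ?_⟩
  have hB : B * ‖x - y‖ ≤ |B| :=
    (mul_le_mul_of_nonneg_right (le_abs_self B) (norm_nonneg _)).trans
      (mul_le_of_le_one_right (abs_nonneg B) hxy)
  calc ϑ x ≤ ϑ y * ϑ (x - y) := h.le_mul_sub x y
    _ ≤ ϑ y * (A * Real.exp |B|) := by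
        refine mul_le_mul_of_nonneg_left ?_ (h.pos y).le
        exact ((le_abs_self _).trans (hAB _)).trans (by gcongr)
    _ = A * Real.exp |B| * ϑ y := mul_comm _ _

theorem exists_infinite_setOf_mul_le {ϑ₁ : (Fin d → ℝ) → ℝ} (h : IsBeurling ϑ)
    (h₁ : IsBeurling ϑ₁) (hnv : NotVanishingAtInfty fun x => ϑ x / ϑ₁ x) :
    ∃ δ : ℝ, 0 < δ ∧
      {a : Fin d → ℤ | δ * ϑ₁ (latticePoint a) ≤ ϑ (latticePoint a)}.Infinite := by
  obtain ⟨δ, hδ, hfar⟩ := hnv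
  obtain ⟨M, hM, hϑM⟩ := h.exists_le_mul_of_norm_sub_le_one
  obtain ⟨M₁, hM₁, hϑM₁⟩ := h₁.exists_le_mul_of_norm_sub_le_one
  refine ⟨δ / (M * M₁), by positivity, fun hfin => ?_⟩
  obtain ⟨R, hR⟩ := (hfin.image fun a => ‖latticePoint a‖).bddAbove
  obtain ⟨x, hx, hxδ⟩ := hfar (max R 0 + 1) (by positivity)
  set a : Fin d → ℤ := fun i => ⌊x i⌋
  have hxa : ‖x - latticePoint a‖ ≤ 1 := norm_sub_latticePoint_le (mem_cube_floor x)
  have hmem : δ / (M * M₁) * ϑ₁ (latticePoint a) ≤ ϑ (latticePoint a) := by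
    rw [div_mul_eq_mul_div, div_le_iff₀ (by positivity)]
    calc δ * ϑ₁ (latticePoint a) ≤ δ * (M₁ * ϑ₁ x) := by
          gcongr
          exact hϑM₁ _ _ (by rwa [norm_sub_rev])
      _ = M₁ * (δ * ϑ₁ x) := mul_left_comm _ _ _
      _ ≤ M₁ * ϑ x := by gcongr; exact (le_div_iff₀ (h₁.pos x)).1 hxδ
      _ ≤ M₁ * (M * ϑ (latticePoint a)) := by gcongr; exact hϑM _ _ hxa
      _ = ϑ (latticePoint a) * (M * M₁) := by ring
  have haR : ‖latticePoint a‖ ≤ R := hR (Set.mem_image_of_mem _ hmem)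
  linarith [norm_le_insert' x (latticePoint a), le_max_left R 0]

end IsBeurling

section Amalgam

variable {d : ℕ} {p q : ℝ} {ω ω' : (Fin d → ℝ) → ℝ} {f g : (Fin d → ℝ) → ℂ}

theorem amalgamNorm_le_mul (hq : 0 < q) {C : ℝ} (h : ∀ x, ‖ω x • f x‖ ≤ C * ‖ω' x • g x‖) :
    amalgamNorm p q ω f ≤ ENNReal.ofReal C * amalgamNorm p q ω' g := by
  have hlocal (α : Fin d → ℤ) := eLpNorm_le_mul_eLpNorm_of_ae_le_mul
    (μ := volume.restrict (cube α)) (Eventually.of_forall h) (ENNReal.ofReal p)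
  unfold amalgamNorm
  calc _ ≤ (∑' α, (ENNReal.ofReal C * eLpNorm (fun x => ω' x • g x) (ENNReal.ofReal p)
        (volume.restrict (cube α))) ^ q) ^ (1 / q) := by gcongr with α; exact hlocal α
    _ = _ := by
      simp only [ENNReal.mul_rpow_of_nonneg _ _ hq.le, ENNReal.tsum_mul_left]
      rw [ENNReal.mul_rpow_of_nonneg _ _ (by positivity), one_div, ENNReal.rpow_rpow_inv hq.ne']

theorem amalgamNorm_mono (hq : 0 < q) (h : ∀ x, ‖ω x • f x‖ ≤ ‖ω' x • g x‖) :
    amalgamNorm p q ω f ≤ amalgamNorm p q ω' g := by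
  simpa using amalgamNorm_le_mul (C := 1) hq (by simpa only [one_mul] using h)

theorem MemAmalgam.of_prec (hq : 0 < q) (hω : ∀ x, 0 ≤ ω x) (h : Prec ω ω')
    (hf : MemAmalgam p q ω' f) : MemAmalgam p q ω f := by
  obtain ⟨C, hC, hle⟩ := h
  refine ⟨hf.1, (amalgamNorm_le_mul (C := C) hq fun x => ?_).trans_lt
    (ENNReal.mul_lt_top ENNReal.ofReal_lt_top hf.2)⟩
  rw [norm_smul, norm_smul, ← mul_assoc, Real.norm_of_nonneg (hω x)]
  gcongr
  exact (hle x).trans (by gcongr; exact Real.le_norm_self _)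

theorem amalgamNorm_translate (p q : ℝ) (ω : (Fin d → ℝ) → ℝ) (f : (Fin d → ℝ) → ℂ)
    (a : Fin d → ℤ) :
    amalgamNorm p q (τ (latticePoint a) ω) (τ (latticePoint a) f) = amalgamNorm p q ω f := by
  unfold amalgamNorm
  rw [← (Equiv.addRight a).tsum_eq]
  congr! 4 with α
  exact eLpNorm_translate_cube (ENNReal.ofReal p) a α fun x => ω x • f x

theorem tsum_rpow_eLpNorm_cube_lt_top (hq : 0 < q) (hf : amalgamNorm p q ω f < ⊤) :
    ∑' α, eLpNorm (fun x => ω x • f x) (ENNReal.ofReal p) (volume.restrict (cube α)) ^ q < ⊤ :=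
  (ENNReal.rpow_lt_top_iff_of_pos (by positivity)).1 hf

theorem tendsto_eLpNorm_cube_cofinite (hq : 0 < q) (hf : amalgamNorm p q ω f < ⊤) :
    Tendsto (fun α => eLpNorm (fun x => ω x • f x) (ENNReal.ofReal p) (volume.restrict (cube α)))
      cofinite (𝓝 0) := by
  have h := (ENNReal.continuous_rpow_const (y := 1 / q)).tendsto 0 |>.comp
    (ENNReal.tendsto_cofinite_zero_of_tsum_ne_top (tsum_rpow_eLpNorm_cube_lt_top hq hf).ne)
  simpa only [Function.comp_def, one_div, ENNReal.rpow_rpow_inv hq.ne',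
    ENNReal.zero_rpow_of_pos (inv_pos.2 hq)] using h

theorem eLpNorm_cube_le_amalgamNorm (hq : 0 < q) (α : Fin d → ℤ) :
    eLpNorm (fun x => ω x • f x) (ENNReal.ofReal p) (volume.restrict (cube α)) ≤
      amalgamNorm p q ω f := by
  rw [amalgamNorm, one_div, ENNReal.le_rpow_inv_iff hq]
  exact ENNReal.le_tsum α

theorem not_tendsto_amalgamNorm_sub_of_le_eLpNorm_cube (hp : 1 ≤ p) (hq : 0 < q)
    (hω : Measurable ω) {u : ℕ → (Fin d → ℝ) → ℂ} (hu : ∀ n, Measurable (u n))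
    {a : ℕ → Fin d → ℤ} (ha : Function.Injective a) {ε : ℝ≥0∞} (hε : ε ≠ 0)
    (hle : ∀ n, ε ≤ eLpNorm (fun x => ω x • u n x) (ENNReal.ofReal p)
      (volume.restrict (cube (a n)))) (hg : MemAmalgam p q ω g) :
    ¬ Tendsto (fun n => amalgamNorm p q ω fun x => u n x - g x) atTop (𝓝 0) := by
  intro hlim
  have hg0 := (tendsto_eLpNorm_cube_cofinite hq hg.2).comp
    (Nat.cofinite_eq_atTop ▸ ha.tendsto_cofinite)
  have hsum := hlim.add hg0
  rw [add_zero] at hsum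
  refine hε (nonpos_iff_eq_zero.1 (ge_of_tendsto' hsum fun n => ?_))
  have hsplit : (fun x => ω x • u n x) =
      (fun x => ω x • (u n x - g x)) + fun x => ω x • g x := by
    ext x
    simp only [Pi.add_apply, ← smul_add, sub_add_cancel]
  calc ε ≤ eLpNorm (fun x => ω x • u n x) (ENNReal.ofReal p) (volume.restrict (cube (a n))) :=
        hle n
    _ ≤ eLpNorm (fun x => ω x • (u n x - g x)) (ENNReal.ofReal p) (volume.restrict (cube (a n))) +
        eLpNorm (fun x => ω x • g x) (ENNReal.ofReal p) (volume.restrict (cube (a n))) := by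
        rw [hsplit]
        exact eLpNorm_add_le (hω.smul ((hu n).sub hg.1)).aestronglyMeasurable
          (hω.smul hg.1).aestronglyMeasurable (ENNReal.one_le_ofReal.2 hp)
    _ ≤ _ := by
        gcongr
        · exact eLpNorm_cube_le_amalgamNorm hq (a n)
        · rfl

end Amalgam

section ExpDecay

theorem tsum_pi_prod_le {ι : Type*} [Fintype ι] {κ : ι → Type*} (u : ∀ i, κ i → ℝ≥0∞) :
    ∑' α : ∀ i, κ i, ∏ i, u i (α i) ≤ ∏ i, ∑' k, u i k := by
  classical
  refine ENNReal.summable.tsum_le_of_sum_le fun s => ?_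
  calc ∑ α ∈ s, ∏ i, u i (α i)
      ≤ ∑ α ∈ Fintype.piFinset fun i => s.image fun α => α i, ∏ i, u i (α i) :=
        Finset.sum_le_sum_of_subset fun α hα =>
          Fintype.mem_piFinset.2 fun i => Finset.mem_image_of_mem _ hα
    _ = ∏ i, ∑ k ∈ s.image fun α => α i, u i k := (Finset.prod_univ_sum _ _).symm
    _ ≤ ∏ i, ∑' k, u i k := Finset.prod_le_prod' fun i _ => ENNReal.sum_le_tsum _

theorem summable_exp_neg_mul_abs_int {c : ℝ} (hc : 0 < c) :
    Summable fun k : ℤ => Real.exp (-(c * |(k : ℝ)|)) := by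
  have hnat : Summable fun n : ℕ => Real.exp (-(c * n)) := by
    simpa only [mul_comm, neg_mul, mul_neg] using
      Real.summable_exp_nat_mul_iff.2 (neg_neg_iff_pos.2 hc)
  apply Summable.of_nat_of_neg <;> simpa using hnat

theorem tsum_exp_neg_mul_sum_abs_int_lt_top (d : ℕ) {c : ℝ} (hc : 0 < c) :
    ∑' α : Fin d → ℤ, ENNReal.ofReal (Real.exp (-(c * ∑ i, |(α i : ℝ)|))) < ⊤ := by
  simp only [Finset.mul_sum, ← Finset.sum_neg_distrib, Real.exp_sum,
    ENNReal.ofReal_prod_of_nonneg fun _ _ => (Real.exp_pos _).le]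
  exact (tsum_pi_prod_le fun (_ : Fin d) (k : ℤ) =>
    ENNReal.ofReal (Real.exp (-(c * |(k : ℝ)|)))).trans_lt
    (ENNReal.prod_lt_top fun _ _ => (summable_exp_neg_mul_abs_int hc).tsum_ofReal_lt_top)

variable {d : ℕ} {p q : ℝ} {ω : (Fin d → ℝ) → ℝ} {f : (Fin d → ℝ) → ℂ}

theorem sum_abs_le_sum_abs_add_of_mem_cube {α : Fin d → ℤ} {x : Fin d → ℝ} (hx : x ∈ cube α) :
    ∑ i, |(α i : ℝ)| ≤ ∑ i, |x i| + d := by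
  have hcoord (i : Fin d) : |(α i : ℝ)| ≤ |x i| + 1 := by
    have hi : |x i - α i| ≤ 1 :=
      (norm_le_pi_norm (x - latticePoint α) i).trans (norm_sub_latticePoint_le hx)
    linarith [abs_sub_abs_le_abs_sub (α i : ℝ) (x i), abs_sub_comm (α i : ℝ) (x i)]
  simpa [Finset.sum_add_distrib] using Finset.sum_le_sum fun i (_ : i ∈ Finset.univ) => hcoord i

theorem eLpNorm_cube_le_of_le_exp_neg {E : Type*} [NormedAddCommGroup E] (p : ℝ≥0∞)
    {f : (Fin d → ℝ) → E} {C : ℝ} (h : ∀ x, ‖f x‖ ≤ C * Real.exp (-∑ i, |x i|))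
    (α : Fin d → ℤ) :
    eLpNorm f p (volume.restrict (cube α)) ≤
      ENNReal.ofReal (C * Real.exp d) * ENNReal.ofReal (Real.exp (-∑ i, |(α i : ℝ)|)) := by
  have hC : 0 ≤ C := nonneg_of_mul_nonneg_left ((norm_nonneg _).trans (h 0)) (Real.exp_pos _)
  have hbound (x : Fin d → ℝ) (hx : x ∈ cube α) :
      ‖f x‖ ≤ C * Real.exp d * Real.exp (-∑ i, |(α i : ℝ)|) := by
    refine (h x).trans ?_
    rw [mul_assoc, ← Real.exp_add]
    gcongr
    linarith [sum_abs_le_sum_abs_add_of_mem_cube hx]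
  have hnorm := eLpNorm_le_of_ae_bound (p := p) (μ := volume.restrict (cube α))
    ((ae_restrict_mem (measurableSet_cube α)).mono hbound)
  rwa [Measure.restrict_apply_univ, volume_cube, ENNReal.one_rpow, one_mul,
    ENNReal.ofReal_mul' (Real.exp_pos _).le] at hnorm

theorem amalgamNorm_lt_top_of_le_exp_neg (hq : 0 < q) {C : ℝ}
    (h : ∀ x, ‖ω x • f x‖ ≤ C * Real.exp (-∑ i, |x i|)) : amalgamNorm p q ω f < ⊤ := by
  refine ENNReal.rpow_lt_top_of_nonneg (by positivity) (ne_of_lt ?_)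
  calc _ ≤ ∑' α : Fin d → ℤ, (ENNReal.ofReal (C * Real.exp d) *
        ENNReal.ofReal (Real.exp (-∑ i, |(α i : ℝ)|))) ^ q := by
        gcongr with α
        exact eLpNorm_cube_le_of_le_exp_neg _ h α
    _ = ENNReal.ofReal (C * Real.exp d) ^ q *
        ∑' α : Fin d → ℤ, ENNReal.ofReal (Real.exp (-(q * ∑ i, |(α i : ℝ)|))) := by
        simp only [ENNReal.mul_rpow_of_nonneg _ _ hq.le, ENNReal.tsum_mul_left,
          ENNReal.ofReal_rpow_of_pos (Real.exp_pos _), ← Real.exp_mul, neg_mul, mul_comm q]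
    _ < ⊤ := ENNReal.mul_lt_top (ENNReal.rpow_lt_top_of_nonneg hq.le ENNReal.ofReal_ne_top)
        (tsum_exp_neg_mul_sum_abs_int_lt_top d hq)

end ExpDecay

section Fourier

variable {d : ℕ}

theorem fourierT_translate (a : Fin d → ℝ) (f : (Fin d → ℝ) → ℂ) (ξ : Fin d → ℝ) :
    fourierT (τ a f) ξ =
      Complex.exp (-(2 * (Real.pi : ℂ) * Complex.I * ∑ i, (a i : ℂ) * (ξ i : ℂ))) *
        fourierT f ξ := by
  unfold fourierT
  rw [← integral_add_right_eq_self _ a, ← integral_const_mul]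
  congr 1 with x
  rw [translate_apply, add_sub_cancel_right, ← mul_assoc, ← Complex.exp_add, ← neg_add, ← mul_add,
    ← Finset.sum_add_distrib]
  simp only [Pi.add_apply, Complex.ofReal_add, add_mul, add_comm]

theorem norm_fourierT_translate (a : Fin d → ℝ) (f : (Fin d → ℝ) → ℂ) (ξ : Fin d → ℝ) :
    ‖fourierT (τ a f) ξ‖ = ‖fourierT f ξ‖ := by
  rw [fourierT_translate, norm_mul, Complex.norm_exp]
  simp [Complex.mul_re, Complex.mul_im, Complex.re_sum, Complex.im_sum]

theorem fourierT_const_smul (c : ℝ) (f : (Fin d → ℝ) → ℂ) :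
    fourierT (c • f) = c • fourierT f := by
  ext ξ
  simp only [fourierT, Pi.smul_apply, mul_smul_comm, integral_smul]

theorem measurable_fourierT_translate {f : (Fin d → ℝ) → ℂ} (hf : Measurable (fourierT f))
    (a : Fin d → ℝ) : Measurable (fourierT (τ a f)) := by
  rw [funext (fourierT_translate a f)]
  fun_prop

end Fourier

section Gaussian

variable {d : ℕ}

/-- The Gaussian `e^{-π|x|²}`, with `|x|` the Euclidean norm, as a complex-valued function. -/
noncomputable def gaussian (x : Fin d → ℝ) : ℂ :=
  Complex.exp (-(Real.pi : ℂ) * ∑ i, (x i : ℂ) ^ 2)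

theorem measurable_gaussian : Measurable (gaussian (d := d)) := by
  unfold gaussian
  fun_prop

theorem norm_gaussian (x : Fin d → ℝ) : ‖gaussian x‖ = Real.exp (-∑ i, Real.pi * x i ^ 2) := by
  rw [gaussian, Complex.norm_exp, ← Finset.mul_sum, ← neg_mul]
  norm_cast

theorem fourierT_gaussian : fourierT (gaussian (d := d)) = gaussian := by
  ext ξ
  have hpi : (Real.pi : ℂ) ≠ 0 := Complex.ofReal_ne_zero.2 Real.pi_ne_zero
  have hint := GaussianFourier.integral_cexp_neg_mul_sum_add (b := (Real.pi : ℂ))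
    (by simpa using Real.pi_pos) fun i : Fin d => -(2 * Real.pi * Complex.I * ξ i)
  rw [div_self hpi, Complex.one_cpow, one_mul] at hint
  calc fourierT gaussian ξ
      = ∫ x : Fin d → ℝ, Complex.exp (-(Real.pi : ℂ) * ∑ i, (x i : ℂ) ^ 2 +
          ∑ i, -(2 * Real.pi * Complex.I * ξ i) * x i) := by
        unfold fourierT gaussian
        congr 1 with x
        rw [← Complex.exp_add, add_comm, Finset.mul_sum Finset.univ _ (2 * _ * _),
          ← Finset.sum_neg_distrib]
        congr! 3 with i
        ring
    _ = gaussian ξ := by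
        rw [hint, gaussian, Finset.sum_div, Finset.mul_sum]
        congr! 2 with i
        field_simp
        rw [Complex.I_sq]
        ring

theorem exp_norm_mul_norm_gaussian_le (B : ℝ) (x : Fin d → ℝ) :
    Real.exp (B * ‖x‖) * ‖gaussian x‖ ≤
      Real.exp (d * (|B| + 1) ^ 2) * Real.exp (-∑ i, |x i|) := by
  rw [norm_gaussian, ← Real.exp_add, ← Real.exp_add, Real.exp_le_exp]
  have hnorm : ‖x‖ ≤ ∑ i, |x i| :=
    (pi_norm_le_iff_of_nonneg (by positivity)).2 fun i =>
      Finset.single_le_sum (f := fun i => |x i|) (fun _ _ => abs_nonneg _) (Finset.mem_univ i)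
  have hB : B * ‖x‖ ≤ |B| * ∑ i, |x i| := by
    gcongr
    exact le_abs_self B
  have hcoord (t : ℝ) : |B| * |t| - Real.pi * t ^ 2 ≤ (|B| + 1) ^ 2 - |t| := by
    rw [← sq_abs t]
    nlinarith [sq_nonneg (|t| - (|B| + 1)), sq_nonneg |t|, Real.pi_gt_three]
  have hsum := Finset.sum_le_sum fun i (_ : i ∈ Finset.univ) => hcoord (x i)
  simp only [Finset.sum_sub_distrib, ← Finset.mul_sum, Finset.sum_const, Finset.card_univ,
    Fintype.card_fin, nsmul_eq_mul] at hsum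
  rw [← Finset.mul_sum]
  linarith

theorem amalgamNorm_gaussian_lt_top {p q : ℝ} (hq : 0 < q) {ω : (Fin d → ℝ) → ℝ}
    (hω : HasExpGrowth ω) : amalgamNorm p q ω gaussian < ⊤ := by
  obtain ⟨A, B, hAB⟩ := hω
  have hA : 0 ≤ A := nonneg_of_mul_nonneg_left ((abs_nonneg _).trans (hAB 0)) (Real.exp_pos _)
  refine amalgamNorm_lt_top_of_le_exp_neg (C := A * Real.exp (d * (|B| + 1) ^ 2)) hq fun x => ?_
  calc ‖ω x • gaussian x‖ ≤ A * Real.exp (B * ‖x‖) * ‖gaussian x‖ := by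
        rw [norm_smul]
        gcongr
        exact hAB x
    _ ≤ A * (Real.exp (d * (|B| + 1) ^ 2) * Real.exp (-∑ i, |x i|)) := by
        rw [mul_assoc]
        exact mul_le_mul_of_nonneg_left (exp_norm_mul_norm_gaussian_le B x) hA
    _ = _ := (mul_assoc _ _ _).symm

theorem memA_gaussian {p q r : ℝ} (hr : 0 < r) {ϑ₁ ϑ₂ : (Fin d → ℝ) → ℝ}
    (h₁ : HasExpGrowth ϑ₁) (h₂ : HasExpGrowth ϑ₂) : MemA p q r ϑ₁ ϑ₂ gaussian := by
  refine ⟨⟨measurable_gaussian, amalgamNorm_gaussian_lt_top zero_lt_one h₁⟩, ?_⟩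
  rw [fourierT_gaussian]
  exact ⟨measurable_gaussian, amalgamNorm_gaussian_lt_top hr h₂⟩

theorem eLpNorm_gaussian_cube_ne_zero {p : ℝ≥0∞} (hp : p ≠ 0) (α : Fin d → ℤ) :
    eLpNorm gaussian p (volume.restrict (cube α)) ≠ 0 := by
  have : NeZero (volume.restrict (cube α)) :=
    ⟨fun h => by simpa [volume_cube] using congrArg (· Set.univ) h⟩
  rw [Ne, eLpNorm_eq_zero_iff measurable_gaussian.aestronglyMeasurable hp]
  intro hzero
  obtain ⟨x, hx⟩ := hzero.exists
  exact Complex.exp_ne_zero _ hx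

end Gaussian

section NormalizedTranslate

variable {d : ℕ} {p q r : ℝ} {ϑ ϑ₁ ϑ₂ : (Fin d → ℝ) → ℝ} {f : (Fin d → ℝ) → ℂ}

/-- The translate of `f` by the lattice point `a`, divided by the weight `ϑ(a)`; for a Beurling
weight this does not increase the `ϑ`-weighted amalgam norms. -/
noncomputable def normalizedTranslate (ϑ : (Fin d → ℝ) → ℝ) (a : Fin d → ℤ)
    (f : (Fin d → ℝ) → ℂ) : (Fin d → ℝ) → ℂ :=
  (ϑ (latticePoint a))⁻¹ • τ (latticePoint a) f

theorem MemA.ANorm_lt_top (hf : MemA p q r ϑ₁ ϑ₂ f) : ANorm p q r ϑ₁ ϑ₂ f < ⊤ :=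
  ENNReal.add_lt_top.2 ⟨hf.1.2, hf.2.2⟩

theorem measurable_normalizedTranslate (ϑ : (Fin d → ℝ) → ℝ) (a : Fin d → ℤ)
    (hf : Measurable f) : Measurable (normalizedTranslate ϑ a f) :=
  (hf.comp (measurable_sub_const _)).const_smul _

theorem amalgamNorm_normalizedTranslate_le (hq : 0 < q) (h : IsBeurling ϑ) (a : Fin d → ℤ) :
    amalgamNorm p q ϑ (normalizedTranslate ϑ a f) ≤ amalgamNorm p q ϑ f := by
  rw [← amalgamNorm_translate p q ϑ f a]
  refine amalgamNorm_mono hq fun x => ?_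
  rw [normalizedTranslate, Pi.smul_apply, ← mul_smul, norm_smul, norm_smul]
  gcongr
  rw [translate_apply, Real.norm_of_nonneg (mul_pos (h.pos x) (inv_pos.2 (h.pos _))).le,
    Real.norm_of_nonneg (h.pos _).le, ← div_eq_mul_inv, div_le_iff₀' (h.pos _)]
  exact h.le_mul_sub x (latticePoint a)

theorem norm_fourierT_normalizedTranslate_le (h : IsBeurling ϑ) (a : Fin d → ℤ)
    (ξ : Fin d → ℝ) : ‖fourierT (normalizedTranslate ϑ a f) ξ‖ ≤ ‖fourierT f ξ‖ := by
  rw [normalizedTranslate, fourierT_const_smul, Pi.smul_apply, norm_smul, norm_fourierT_translate,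
    Real.norm_of_nonneg (inv_nonneg.2 (h.pos _).le)]
  exact mul_le_of_le_one_left (norm_nonneg _) (inv_le_one_of_one_le₀ (h.2.1 _))

theorem amalgamNorm_fourierT_normalizedTranslate_le {ω : (Fin d → ℝ) → ℝ} (hq : 0 < q)
    (h : IsBeurling ϑ) (a : Fin d → ℤ) :
    amalgamNorm p q ω (fourierT (normalizedTranslate ϑ a f)) ≤ amalgamNorm p q ω (fourierT f) :=
  amalgamNorm_mono hq fun ξ => by
    rw [norm_smul, norm_smul]
    gcongr
    exact norm_fourierT_normalizedTranslate_le h a ξ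

theorem ANorm_normalizedTranslate_le (hr : 0 < r) (h₁ : IsBeurling ϑ₁) (a : Fin d → ℤ) :
    ANorm p q r ϑ₁ ϑ₂ (normalizedTranslate ϑ₁ a f) ≤ ANorm p q r ϑ₁ ϑ₂ f :=
  add_le_add (amalgamNorm_normalizedTranslate_le zero_lt_one h₁ a)
    (amalgamNorm_fourierT_normalizedTranslate_le hr h₁ a)

theorem MemA.normalizedTranslate (hf : MemA p q r ϑ₁ ϑ₂ f) (hr : 0 < r) (h₁ : IsBeurling ϑ₁)
    (a : Fin d → ℤ) : MemA p q r ϑ₁ ϑ₂ (normalizedTranslate ϑ₁ a f) := by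
  refine ⟨⟨measurable_normalizedTranslate ϑ₁ a hf.1.1,
    (amalgamNorm_normalizedTranslate_le zero_lt_one h₁ a).trans_lt hf.1.2⟩, ?_,
    (amalgamNorm_fourierT_normalizedTranslate_le hr h₁ a).trans_lt hf.2.2⟩
  rw [_root_.normalizedTranslate, fourierT_const_smul]
  exact (measurable_fourierT_translate hf.2.1 _).const_smul _

theorem le_eLpNorm_cube_normalizedTranslate {δ M : ℝ} (hδ : 0 < δ) (hM : 0 < M)
    (h₁ : ∀ x, 0 < ϑ₁ x) (hϑM : ∀ x y, ‖x - y‖ ≤ 1 → ϑ x ≤ M * ϑ y)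
    {a : Fin d → ℤ} (ha : δ * ϑ₁ (latticePoint a) ≤ ϑ (latticePoint a)) (p : ℝ≥0∞) :
    ENNReal.ofReal (δ / M) * eLpNorm f p (volume.restrict (cube 0)) ≤
      eLpNorm (fun x => ϑ x • normalizedTranslate ϑ₁ a f x) p (volume.restrict (cube a)) := by
  have hlower (x : Fin d → ℝ) (hx : x ∈ cube a) : δ / M ≤ ϑ x * (ϑ₁ (latticePoint a))⁻¹ := by
    rw [← div_eq_mul_inv, div_le_div_iff₀ hM (h₁ _), mul_comm (ϑ x)]
    exact ha.trans (hϑM _ _ (by rw [norm_sub_rev]; exact norm_sub_latticePoint_le hx))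
  have hδM : 0 ≤ δ / M := by positivity
  rw [← eLpNorm_translate_cube p a 0 f, zero_add, ← Real.enorm_of_nonneg hδM, ← eLpNorm_const_smul]
  refine eLpNorm_mono_ae ((ae_restrict_mem (measurableSet_cube a)).mono fun x hx => ?_)
  rw [normalizedTranslate, Pi.smul_apply, Pi.smul_apply, ← mul_smul, norm_smul, norm_smul,
    Real.norm_of_nonneg hδM]
  gcongr
  exact (hlower x hx).trans (Real.le_norm_self _)

theorem not_exists_tendsto_subseq_normalizedTranslate (hp : 1 ≤ p) (hq : 0 < q)
    (h : IsBeurling ϑ) (h₁ : ∀ x, 0 < ϑ₁ x) (hf : Measurable f)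
    (hf0 : eLpNorm f (ENNReal.ofReal p) (volume.restrict (cube 0)) ≠ 0) {δ : ℝ} (hδ : 0 < δ)
    {a : ℕ → Fin d → ℤ} (ha : Function.Injective a)
    (haδ : ∀ n, δ * ϑ₁ (latticePoint (a n)) ≤ ϑ (latticePoint (a n))) :
    ¬ ∃ (φ : ℕ → ℕ) (g : (Fin d → ℝ) → ℂ), StrictMono φ ∧ MemAmalgam p q ϑ g ∧
      Tendsto (fun k => amalgamNorm p q ϑ fun x =>
        normalizedTranslate ϑ₁ (a (φ k)) f x - g x) atTop (𝓝 0) := by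
  rintro ⟨φ, g, hφ, hg, hlim⟩
  obtain ⟨M, hM, hϑM⟩ := h.exists_le_mul_of_norm_sub_le_one
  have hε : ENNReal.ofReal (δ / M) * eLpNorm f (ENNReal.ofReal p) (volume.restrict (cube 0)) ≠ 0 :=
    mul_ne_zero (ENNReal.ofReal_pos.2 (by positivity)).ne' hf0
  exact not_tendsto_amalgamNorm_sub_of_le_eLpNorm_cube hp hq h.1
    (fun _ => measurable_normalizedTranslate ϑ₁ _ hf) (ha.comp hφ.injective) hε
    (fun k => le_eLpNorm_cube_normalizedTranslate hδ hM h₁ hϑM (haδ (φ k)) _) hg hlim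

end NormalizedTranslate

theorem A_embedding_never_compact_general {d : ℕ} (p q r : ℝ) (hp : 1 ≤ p) (_hq : 0 < q)
    (hr : 0 < r) (ϑ ϑ₁ ϑ₂ : (Fin d → ℝ) → ℝ)
    (hϑ : IsBeurling ϑ) (h1 : IsBeurling ϑ₁) (h2 : HasExpGrowth ϑ₂)
    (hprec : Prec ϑ ϑ₁) (hnv : NotVanishingAtInfty (fun x => ϑ x / ϑ₁ x)) :
    (∀ f : (Fin d → ℝ) → ℂ, MemA p q r ϑ₁ ϑ₂ f → MemAmalgam p 1 ϑ f) ∧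
    ∃ f : ℕ → (Fin d → ℝ) → ℂ,
      (∀ n, MemA p q r ϑ₁ ϑ₂ (f n)) ∧
      (∃ M : ℝ, ∀ n, ANorm p q r ϑ₁ ϑ₂ (f n) ≤ ENNReal.ofReal M) ∧
      ¬ ∃ (φ : ℕ → ℕ) (g : (Fin d → ℝ) → ℂ), StrictMono φ ∧ MemAmalgam p 1 ϑ g ∧
          Tendsto (fun k => amalgamNorm p 1 ϑ (fun x => f (φ k) x - g x)) atTop (nhds 0) := by
  have hG : MemA p q r ϑ₁ ϑ₂ gaussian := memA_gaussian hr h1.hasExpGrowth h2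
  have hG0 : eLpNorm gaussian (ENNReal.ofReal p) (volume.restrict (cube (0 : Fin d → ℤ))) ≠ 0 :=
    eLpNorm_gaussian_cube_ne_zero (ENNReal.ofReal_pos.2 (zero_lt_one.trans_le hp)).ne' 0
  obtain ⟨δ, hδ, hinf⟩ := hϑ.exists_infinite_setOf_mul_le h1 hnv
  let a (n : ℕ) : Fin d → ℤ := hinf.natEmbedding _ n
  have ha : Function.Injective a :=
    Subtype.val_injective.comp (hinf.natEmbedding _).injective
  refine ⟨fun f hf => hf.1.of_prec zero_lt_one (fun x => (hϑ.pos x).le) hprec,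
    fun n => normalizedTranslate ϑ₁ (a n) gaussian, fun n => hG.normalizedTranslate hr h1 (a n),
    ⟨(ANorm p q r ϑ₁ ϑ₂ gaussian).toReal, fun n => ?_⟩,
    not_exists_tendsto_subseq_normalizedTranslate hp zero_lt_one hϑ h1.pos measurable_gaussian
      hG0 hδ ha fun n => (hinf.natEmbedding _ n).2⟩
  rw [ENNReal.ofReal_toReal hG.ANorm_lt_top.ne]
  exact ANorm_normalizedTranslate_le hr h1 (a n)

/-- if `ϑ ≺ ϑ₁` and `ϑ/ϑ₁` does not tend to zero at infinity, then
`A^{p,1,q,r}_{ϑ₁,ϑ₂}(ℝ^d) ⊆ (L^p_ϑ, ℓ¹)` and this inclusion is never compact. -/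
theorem A_embedding_never_compact {d : ℕ} (p q r : ℝ) (hp : 1 < p) (hq : 1 < q) (hr : 1 < r)
    (ϑ ϑ₁ ϑ₂ : (Fin d → ℝ) → ℝ)
    (hϑ : IsBeurling ϑ) (h1 : IsBeurling ϑ₁) (h2 : IsBeurling ϑ₂)
    (hprec : Prec ϑ ϑ₁) (hnv : NotVanishingAtInfty (fun x => ϑ x / ϑ₁ x)) :
    (∀ f : (Fin d → ℝ) → ℂ, MemA p q r ϑ₁ ϑ₂ f → MemAmalgam p 1 ϑ f) ∧
    ∃ f : ℕ → (Fin d → ℝ) → ℂ,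
      (∀ n, MemA p q r ϑ₁ ϑ₂ (f n)) ∧
      (∃ M : ℝ, ∀ n, ANorm p q r ϑ₁ ϑ₂ (f n) ≤ ENNReal.ofReal M) ∧
      ¬ ∃ (φ : ℕ → ℕ) (g : (Fin d → ℝ) → ℂ), StrictMono φ ∧ MemAmalgam p 1 ϑ g ∧
          Tendsto (fun k => amalgamNorm p 1 ϑ (fun x => f (φ k) x - g x)) atTop (nhds 0) := by
  exact A_embedding_never_compact_general p q r hp.le (zero_lt_one.trans hq) (zero_lt_one.trans hr)
    ϑ ϑ₁ ϑ₂ hϑ h1 h2.hasExpGrowth hprec hnv
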